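/- arXiv:2309.07744 — 2 statements merged into one kernel-verified Lean document; each statement's English description precedes it below -/
import Mathlib

section
/- For every integer d ≥ 2, every prime power q, and every nonempty finite point set P ⊆ 𝔽_q^d, the number of hyperplanes π of 𝔽_q^d such that |π ∩ P| does not lie in the interval [|P|/(2q), 2|P|/q] is at most 8q^{d+1}/|P|. -/
/-- A hyperplane in `𝔽_q^d` is a `(d-1)`-dimensional affine subspace. -/
def IsHyperplane (F : Type*) [Field F] (d : ℕ) (π : AffineSubspace F (Fin d → F)) : Prop :=
  (π : Set (Fin d → F)).Nonempty ∧ Module.finrank F π.direction = d - 1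

open Classical in
lemma aux_kernel_card {F : Type} [Field F] [Fintype F] {d : ℕ} (z : Fin d → F) (hz : z ≠ 0) :
    (∑ w : Fin d → F, if w ⬝ᵥ z = 0 then (1 : ℝ) else 0) * (Fintype.card F : ℝ)
      = (Fintype.card F : ℝ) ^ d := by
  let φ : (Fin d → F) →ₗ[F] F := (dotProductBilin F F).flip z
  have hφ : ∀ w, φ w = w ⬝ᵥ z := fun w => rfl
  have hφ0 : φ ≠ 0 := by
    intro h
    apply hz
    funext i
    have := hφ (Pi.single i 1)
    rw [h] at this
    simpa using this.symm
  have hsurj : Function.Surjective φ := LinearMap.surjective hφ0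
  have h1 := LinearMap.finrank_range_add_finrank_ker φ
  rw [LinearMap.range_eq_top.2 hsurj] at h1
  simp only [finrank_top, Module.finrank_self, Module.finrank_fin_fun] at h1
  have h2 := Module.card_eq_pow_finrank (K := F) (V := LinearMap.ker φ)
  have h3 : (∑ w : Fin d → F, if w ⬝ᵥ z = 0 then (1 : ℝ) else 0)
      = (Fintype.card (LinearMap.ker φ) : ℝ) := by
    rw [Finset.sum_boole, Fintype.card_subtype]
    congr 2
  rw [h3, h2, Nat.cast_pow, ← pow_succ]
  congr 1
  omega

open Classical in
noncomputable def auxN {F : Type} [Field F] {d : ℕ} (P : Finset (Fin d → F))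
    (w : Fin d → F) (t : F) : ℝ := ∑ x ∈ P, if w ⬝ᵥ x = t then (1 : ℝ) else 0

open Classical in
lemma aux_sum_N {F : Type} [Field F] [Fintype F] {d : ℕ} (P : Finset (Fin d → F))
    (w : Fin d → F) : ∑ t, auxN P w t = P.card := by
  unfold auxN
  rw [Finset.sum_comm]
  simp

open Classical in
lemma aux_sum_N_sq {F : Type} [Field F] [Fintype F] {d : ℕ} (P : Finset (Fin d → F))
    (w : Fin d → F) : ∑ t, auxN P w t ^ 2
      = ∑ x ∈ P, ∑ y ∈ P, if w ⬝ᵥ (x - y) = 0 then (1 : ℝ) else 0 := by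
  unfold auxN
  simp_rw [sq, Finset.sum_mul_sum]
  rw [Finset.sum_comm]
  refine Finset.sum_congr rfl fun x _ => ?_
  rw [Finset.sum_comm]
  refine Finset.sum_congr rfl fun y _ => ?_
  rw [dotProduct_sub, sub_eq_zero]
  simp [eq_comm]

open Classical in
lemma aux_pairs {F : Type} [Field F] [Fintype F] {d : ℕ} (P : Finset (Fin d → F)) :
    (∑ w : Fin d → F, ∑ t, auxN P w t ^ 2) * (Fintype.card F : ℝ)
      = P.card * (Fintype.card F : ℝ) ^ d * Fintype.card F
        + P.card * (P.card - 1) * (Fintype.card F : ℝ) ^ d := by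
  simp_rw [aux_sum_N_sq]
  rw [Finset.sum_comm]
  simp_rw [Finset.sum_comm (s := Finset.univ) (t := P)]
  have key : ∀ x ∈ P, (∑ y ∈ P, ∑ w : Fin d → F, if w ⬝ᵥ (x - y) = 0 then (1 : ℝ) else 0)
      * (Fintype.card F : ℝ) = (Fintype.card F : ℝ) ^ d * Fintype.card F
        + (P.card - 1) * (Fintype.card F : ℝ) ^ d := by
    intro x hx
    rw [← Finset.add_sum_erase P _ hx, add_mul]
    congr 1
    · simp
    · rw [Finset.sum_mul, Finset.sum_congr rfl (g := fun _ => (Fintype.card F : ℝ) ^ d)]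
      · have : 1 ≤ P.card := Finset.card_pos.2 ⟨x, hx⟩
        simp [Finset.card_erase_of_mem hx, Nat.cast_sub this]
      · intro y hy
        apply aux_kernel_card
        rw [sub_ne_zero]
        exact (Finset.ne_of_mem_erase hy).symm
  rw [Finset.sum_mul, Finset.sum_congr rfl key]
  simp
  ring

open Classical in
lemma aux_var {F : Type} [Field F] [Fintype F] {d : ℕ} (P : Finset (Fin d → F)) :
    (∑ w ∈ Finset.univ.erase (0 : Fin d → F), ∑ t,
      (auxN P w t - P.card / (Fintype.card F : ℝ)) ^ 2) * (Fintype.card F : ℝ)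
      ≤ P.card * (Fintype.card F : ℝ) ^ d * (Fintype.card F - 1) := by
  have hq1 : (1 : ℝ) ≤ Fintype.card F := by exact_mod_cast Fintype.card_pos
  have hq : (Fintype.card F : ℝ) ≠ 0 := by positivity
  have h1 : ∀ w : Fin d → F, ∑ t, (auxN P w t - P.card / (Fintype.card F : ℝ)) ^ 2
      = ∑ t, auxN P w t ^ 2 - (P.card : ℝ) ^ 2 / Fintype.card F := by
    intro w
    simp_rw [sub_sq]
    rw [Finset.sum_add_distrib, Finset.sum_sub_distrib, ← Finset.sum_mul, ← Finset.mul_sum,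
      aux_sum_N]
    simp
    field_simp
    ring
  have h0 : ∑ t, auxN P (0 : Fin d → F) t ^ 2 = (P.card : ℝ) ^ 2 := by
    rw [aux_sum_N_sq]
    simp [sq]
  have h2 := aux_pairs P
  rw [← Finset.add_sum_erase _ _ (Finset.mem_univ (0 : Fin d → F)), h0] at h2
  simp_rw [h1]
  rw [Finset.sum_sub_distrib, sub_mul]
  have h3 : (∑ w ∈ Finset.univ.erase (0 : Fin d → F), (P.card : ℝ) ^ 2 / (Fintype.card F : ℝ))
      * (Fintype.card F : ℝ) = ((Fintype.card F : ℝ) ^ d - 1) * (P.card : ℝ) ^ 2 := by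
    rw [Finset.sum_const, Finset.card_erase_of_mem (Finset.mem_univ _), Finset.card_univ,
      Fintype.card_fun, Fintype.card_fin, nsmul_eq_mul, Nat.cast_sub (Nat.one_le_pow _ _ Fintype.card_pos)]
    push_cast
    field_simp
  rw [h3]
  nlinarith [sq_nonneg (P.card : ℝ)]

lemma aux_hyper {F : Type} [Field F] {d : ℕ} (hd : 2 ≤ d)
    (π : AffineSubspace F (Fin d → F)) (h : IsHyperplane F d π) :
    ∃ (w : Fin d → F) (t : F), w ≠ 0 ∧ ∀ x, x ∈ π ↔ w ⬝ᵥ x = t := by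
  obtain ⟨⟨p, hp⟩, hfin⟩ := h
  have hlt : π.direction < ⊤ := by
    rw [lt_top_iff_ne_top]
    intro h
    rw [h] at hfin
    simp at hfin
    omega
  obtain ⟨f, hf0, hf⟩ := Submodule.exists_le_ker_of_lt_top _ hlt
  have h1 := LinearMap.finrank_range_add_finrank_ker f
  rw [LinearMap.range_eq_top.2 (LinearMap.surjective hf0)] at h1
  simp only [finrank_top, Module.finrank_self, Module.finrank_fin_fun] at h1
  have heq : π.direction = LinearMap.ker f :=
    Submodule.eq_of_le_of_finrank_eq hf (by omega)
  have hw : ∀ x, (fun i => f (Pi.single i 1)) ⬝ᵥ x = f x := by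
    intro x
    rw [LinearMap.pi_apply_eq_sum_univ f x]
    simp only [dotProduct, smul_eq_mul]
    refine Finset.sum_congr rfl fun i _ => ?_
    rw [mul_comm]
    congr 2
    funext j
    simp [Pi.single_apply, eq_comm]
  refine ⟨fun i => f (Pi.single i 1), f p, ?_, ?_⟩
  · intro h
    apply hf0
    ext x
    simpa using congrFun h x
  · intro x
    rw [hw, ← AffineSubspace.vsub_right_mem_direction_iff_mem hp, heq, LinearMap.mem_ker]
    simp [sub_eq_zero]

/-- For every nonempty `P ⊆ 𝔽_q^d`, the number of hyperplanes `π` with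
`|π ∩ P| ∉ [|P|/(2q), 2|P|/q]` is at most `8q^{d+1}/|P|`. -/
theorem few_hyperplanes_with_atypical_intersection
    (q d : ℕ) (hq : IsPrimePow q) (hd : 2 ≤ d)
    (F : Type) [Field F] [Fintype F] (hF : Fintype.card F = q)
    (P : Finset (Fin d → F)) (hP : P.Nonempty) :
    (({π : AffineSubspace F (Fin d → F) | IsHyperplane F d π ∧
        ¬ ((((π : Set (Fin d → F)) ∩ ↑P).ncard : ℝ) ∈
            Set.Icc ((P.card : ℝ) / (2 * q)) (2 * (P.card : ℝ) / q))}).ncard : ℝ)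
      ≤ 8 * (q : ℝ) ^ (d + 1) / (P.card : ℝ) := by
  classical
  set S := {π : AffineSubspace F (Fin d → F) | IsHyperplane F d π ∧
        ¬ ((((π : Set (Fin d → F)) ∩ ↑P).ncard : ℝ) ∈
            Set.Icc ((P.card : ℝ) / (2 * q)) (2 * (P.card : ℝ) / q))} with hS
  have hp : (0 : ℝ) < P.card := by exact_mod_cast hP.card_pos
  have hq2 : (2 : ℝ) ≤ q := by exact_mod_cast hq.two_le
  have hq0 : (0 : ℝ) < q := by linarith
  have hex : ∀ π : S, ∃ (w : Fin d → F) (t : F), w ≠ 0 ∧ ∀ x, x ∈ π.1 ↔ w ⬝ᵥ x = t :=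
    fun π => aux_hyper hd π.1 π.2.1
  choose w t hw hmem using hex
  let T : Finset ((Fin d → F) × F) := ((Finset.univ.erase 0) ×ˢ Finset.univ).filter
    fun a => (P.card : ℝ) ^ 2 / (4 * q ^ 2) ≤ (auxN P a.1 a.2 - P.card / (q : ℝ)) ^ 2
  have hbad : ∀ (π : S) (c : Fˣ), ((c : F) • w π, (c : F) * t π) ∈ T := by
    intro π c
    have hN : auxN P ((c : F) • w π) ((c : F) * t π)
        = (((π.1 : Set (Fin d → F)) ∩ ↑P).ncard : ℝ) := by
      unfold auxN
      rw [Finset.sum_boole, ← Set.ncard_coe_finset]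
      congr 2
      ext x
      simp [hmem, and_comm]
    have h2 := π.2.2
    simp only [T, Finset.mem_filter, Finset.mem_product, Finset.mem_erase, Finset.mem_univ,
      and_true]
    refine ⟨by simp [hw], ?_⟩
    rw [hN]
    generalize (((π.1 : Set (Fin d → F)) ∩ ↑P).ncard : ℝ) = n at h2
    have e1 : (P.card : ℝ) ^ 2 / (4 * q ^ 2) = ((P.card : ℝ) / (2 * q)) ^ 2 := by
      field_simp; norm_num
    have e2 : (P.card : ℝ) / q = 2 * ((P.card : ℝ) / (2 * q)) := by field_simp
    have e3 : 2 * (P.card : ℝ) / q = 4 * ((P.card : ℝ) / (2 * q)) := by field_simp; norm_num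
    have e4 : 0 < (P.card : ℝ) / (2 * q) := by positivity
    rw [e3] at h2
    rw [e1, e2]
    generalize (P.card : ℝ) / (2 * q) = a at *
    rw [Set.mem_Icc, not_and_or, not_le, not_le] at h2
    rcases h2 with h2 | h2 <;> nlinarith
  have hinj : Function.Injective (fun a : S × Fˣ => (⟨_, hbad a.1 a.2⟩ : T)) := by
    rintro ⟨π, c⟩ ⟨π', c'⟩ h
    simp only [Subtype.mk.injEq, Prod.mk.injEq] at h
    obtain ⟨h1, h2⟩ := h
    have hππ : π = π' := by
      apply Subtype.ext
      ext x
      rw [hmem, hmem]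
      have a1 : w π ⬝ᵥ x = t π ↔ ((c : F) • w π) ⬝ᵥ x = (c : F) * t π := by simp
      have a2 : w π' ⬝ᵥ x = t π' ↔ ((c' : F) • w π') ⬝ᵥ x = (c' : F) * t π' := by simp
      rw [a1, a2, h1, h2]
    subst hππ
    have : (c : F) = c' := smul_left_injective F (hw π) h1
    rw [Units.ext this]
  have hcard := Nat.card_le_card_of_injective _ hinj
  rw [Nat.card_prod, Nat.card_coe_set_eq, Nat.card_eq_fintype_card, Fintype.card_units, hF,
    Nat.card_eq_fintype_card, Fintype.card_coe] at hcard
  have hcard' : (S.ncard : ℝ) * (q - 1) ≤ T.card := by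
    have : ((S.ncard * (q - 1) : ℕ) : ℝ) ≤ T.card := by exact_mod_cast hcard
    rwa [Nat.cast_mul, Nat.cast_sub (by have := hq.two_le; omega), Nat.cast_one] at this
  have hvar := aux_var P
  rw [hF, ← Finset.sum_product'] at hvar
  have hT : (T.card : ℝ) * ((P.card : ℝ) ^ 2 / (4 * q ^ 2)) ≤
      ∑ a ∈ (Finset.univ.erase (0 : Fin d → F)) ×ˢ (Finset.univ : Finset F),
        (auxN P a.1 a.2 - P.card / (q : ℝ)) ^ 2 := by
    rw [← nsmul_eq_mul]
    refine (Finset.card_nsmul_le_sum T _ _ fun a ha => (Finset.mem_filter.1 ha).2).trans ?_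
    exact Finset.sum_le_sum_of_subset_of_nonneg (Finset.filter_subset _ _)
      fun _ _ _ => sq_nonneg _
  have h5 : (S.ncard : ℝ) * (q - 1) * ((P.card : ℝ) ^ 2 / (4 * q ^ 2)) * q
      ≤ P.card * (q : ℝ) ^ d * (q - 1) := by
    refine le_trans ?_ hvar
    refine mul_le_mul_of_nonneg_right (le_trans ?_ hT) hq0.le
    exact mul_le_mul_of_nonneg_right hcard' (by positivity)
  have h6 : ((S.ncard : ℝ) * P.card) * (P.card * (q - 1))
      ≤ (4 * (q : ℝ) ^ (d + 1)) * (P.card * (q - 1)) := by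
    have h7 := mul_le_mul_of_nonneg_right h5 (show (0 : ℝ) ≤ 4 * q by positivity)
    have e : (S.ncard : ℝ) * (q - 1) * ((P.card : ℝ) ^ 2 / (4 * q ^ 2)) * q * (4 * q)
      = ((S.ncard : ℝ) * P.card) * (P.card * (q - 1)) := by field_simp
    rw [e] at h7
    refine h7.trans (le_of_eq ?_)
    ring
  have h8 := le_of_mul_le_mul_right h6 (mul_pos hp (by linarith))
  rw [le_div_iff₀ hp]
  have : (0 : ℝ) < (q : ℝ) ^ (d + 1) := by positivity
  linarith
end

section
/- There exists an absolute constant c > 0 such that for every δ > 0 there exists Q with the following property for every prime power q ≥ Q. Let S_p be a p-random subset of 𝔽_q² (each point included independently with probability p). (a) If 0 ≤ p ≤ q^{−1/2}(log q)², then the probability that S_p contains a general position set of size at least c·q^{1/2}(log q)² is at most δ. (b) If q^{−1/2}(log q)² ≤ p ≤ 1, then the probability that S_p contains a general position set of size at least c·p·q is at most δ. -/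
open scoped Classical

/-- A set `P ⊆ 𝔽_q^d` is in general position if every `(d+1)`-element subset of `P`
is affinely independent. -/
def IsGenPos (F : Type*) [Field F] (d : ℕ) (P : Set (Fin d → F)) : Prop :=
  ∀ s : Finset (Fin d → F), (↑s : Set (Fin d → F)) ⊆ P → s.card = d + 1 →
    AffineIndependent F ((↑) : s → (Fin d → F))

/-- The probability, under the product Bernoulli distribution in which each point of the
finite ground set `V` is included independently with probability `p`, that the random
subset satisfies the event `E`. -/
noncomputable def bernoulliProb (V : Type*) [Fintype V] (p : ℝ)
    (E : Finset V → Prop) : ℝ :=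
  ∑ S : Finset V,
    if E S then p ^ S.card * (1 - p) ^ (Fintype.card V - S.card) else 0

theorem bern_superset {V : Type*} [Fintype V] (p : ℝ) (Y : Finset V) :
    bernoulliProb V p (fun S => Y ⊆ S) = p ^ Y.card := by
  unfold bernoulliProb
  have h0 : (∑ S : Finset V, @ite ℝ ((fun S => Y ⊆ S) S) (Classical.propDecidable _)
      (p ^ S.card * (1 - p) ^ (Fintype.card V - S.card)) 0) =
      ∑ S ∈ Finset.univ.filter (fun S : Finset V => Y ⊆ S),
      p ^ S.card * (1 - p) ^ (Fintype.card V - S.card) := by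
    rw [Finset.sum_filter]
    refine Finset.sum_congr rfl fun S _ => ?_
    by_cases hS : Y ⊆ S <;> simp [hS]
  rw [h0]
  have h := Finset.sum_pow_mul_eq_add_pow p (1 - p) (Yᶜ)
  have h2 : ∑ S ∈ Finset.univ.filter (fun S : Finset V => Y ⊆ S),
      p ^ S.card * (1 - p) ^ (Fintype.card V - S.card) =
      ∑ t ∈ (Yᶜ).powerset, p ^ Y.card * (p ^ t.card * (1 - p) ^ ((Yᶜ).card - t.card)) := by
    refine Finset.sum_nbij' (fun S => S \ Y) (fun t => Y ∪ t) ?_ ?_ ?_ ?_ ?_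
    · intro S hS
      simp only [Finset.mem_powerset]
      intro x hx
      simp at hx ⊢
      exact hx.2
    · intro t ht
      simp
    · intro S hS
      simp at hS
      simp [hS]
    · intro t ht
      simp only [Finset.mem_powerset] at ht
      ext x
      have := @ht x
      simp at this ⊢
      tauto
    · intro S hS
      simp at hS
      have h1 : (S \ Y).card + Y.card = S.card := Finset.card_sdiff_add_card_eq_card hS
      have h3 : (Yᶜ).card = Fintype.card V - Y.card := Finset.card_compl Y
      rw [← mul_assoc, ← pow_add, h3]
      congr 2
      · omega
      · omega
  rw [h2, ← Finset.mul_sum, h]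
  simp

theorem bern_union {V : Type*} [Fintype V] (p : ℝ) (hp0 : 0 ≤ p) (hp1 : p ≤ 1)
    (E : Finset V → Prop) (m : ℕ) (YY : Finset (Finset V)) (hY : ∀ Y ∈ YY, Y.card = m)
    (hE : ∀ S, E S → ∃ Y ∈ YY, Y ⊆ S) :
    bernoulliProb V p E ≤ YY.card * p ^ m := by
  have h : bernoulliProb V p E ≤ ∑ Y ∈ YY, bernoulliProb V p (fun S => Y ⊆ S) := by
    unfold bernoulliProb
    rw [Finset.sum_comm]
    refine Finset.sum_le_sum fun S _ => ?_
    have hn : ∀ Y ∈ YY, (0:ℝ) ≤ @ite ℝ ((fun S => Y ⊆ S) S) (Classical.propDecidable _)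
        (p ^ S.card * (1 - p) ^ (Fintype.card V - S.card)) 0 := by
      intro Y _
      have : 0 ≤ 1 - p := by linarith
      split_ifs <;> positivity
    split_ifs with hS
    · obtain ⟨Y, hYm, hYS⟩ := hE S hS
      have := Finset.single_le_sum hn hYm
      simpa [hYS] using this
    · exact Finset.sum_nonneg hn
  refine h.trans (le_of_eq ?_)
  rw [Finset.sum_congr rfl (fun Y hYm => by rw [bern_superset, hY Y hYm])]
  simp

/-- Kleitman-Winston container lemma for graphs. -/
theorem kw {V : Type*} [DecidableEq V] (N : V → Finset V) (R β : ℝ)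
    (h : ∀ B : Finset V, R < B.card → ∃ v ∈ B, β * B.card ≤ ((B ∩ N v).card : ℝ)) :
    ∀ (j n : ℕ) (B : Finset V), B.card = n → (n : ℝ) ≤ R * Real.exp (β * j) →
      ∃ CC : Finset (Finset V), CC.card ≤ (n + 1) ^ j ∧ (∀ C ∈ CC, (C.card : ℝ) ≤ R) ∧
        ∀ I : Finset V, I ⊆ B → (∀ v ∈ I, ∀ y ∈ I, y ∉ N v) → ∃ C ∈ CC, I ⊆ C := by
  intro j
  induction j with
  | zero =>
    intro n B hB hn
    refine ⟨{B}, by simp, ?_, ?_⟩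
    · simp only [Finset.mem_singleton, forall_eq, hB]
      simpa using hn
    · intro I hI _
      exact ⟨B, by simp, hI⟩
  | succ j ihj =>
    intro n
    induction n with
    | zero =>
      intro B hB hn
      refine ⟨{B}, by simp, ?_, ?_⟩
      · simp only [Finset.mem_singleton, forall_eq, hB]
        simp only [Nat.cast_zero] at hn ⊢
        exact nonneg_of_mul_nonneg_left hn (Real.exp_pos _)
      · intro I hI _
        exact ⟨B, by simp, hI⟩
    | succ n ihn =>
      intro B hB hn
      by_cases hR : R < B.card
      · obtain ⟨v, hv, hd⟩ := h B hR
        have hcard : ((B \ N v).card : ℝ) = B.card - (B ∩ N v).card := by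
          have := Finset.card_sdiff_add_card_inter B (N v)
          rw [← this]; push_cast; ring
        have hle : (B \ N v).card ≤ n + 1 := by
          rw [← hB]; exact Finset.card_le_card Finset.sdiff_subset
        obtain ⟨C1, h1, h2, h3⟩ := ihj (B \ N v).card (B \ N v) rfl (by
          rw [hcard]
          have e1 : (B.card : ℝ) * (1 - β) ≤ B.card * Real.exp (-β) := by
            gcongr
            have := Real.add_one_le_exp (-β)
            linarith
          have e2 : (B.card : ℝ) * Real.exp (-β) ≤ R * Real.exp (β * j) := by
            rw [hB]
            calc ((n + 1 : ℕ) : ℝ) * Real.exp (-β)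
                ≤ (R * Real.exp (β * ((j + 1 : ℕ) : ℝ))) * Real.exp (-β) := by gcongr
              _ = R * Real.exp (β * j) := by
                rw [mul_assoc, ← Real.exp_add]; congr 2; push_cast; ring
          linarith)
        obtain ⟨C2, g1, g2, g3⟩ := ihn (B.erase v) (by rw [Finset.card_erase_of_mem hv, hB]; rfl) (by
          refine le_trans ?_ hn
          push_cast; linarith)
        refine ⟨C1 ∪ C2, ?_, ?_, ?_⟩
        · calc (C1 ∪ C2).card ≤ C1.card + C2.card := Finset.card_union_le _ _
            _ ≤ (n + 1 + 1) ^ j + (n + 1) ^ (j + 1) :=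
              add_le_add (h1.trans (Nat.pow_le_pow_left (by omega) j)) g1
            _ ≤ (n + 1 + 1) ^ j + (n + 1) * (n + 1 + 1) ^ j := by
              rw [pow_succ (n + 1), mul_comm ((n + 1) ^ j)]
              gcongr
              omega
            _ = (n + 1 + 1) ^ (j + 1) := by ring
        · intro C hC
          rcases Finset.mem_union.1 hC with hC | hC
          · exact h2 C hC
          · exact g2 C hC
        · intro I hI hind
          by_cases hvI : v ∈ I
          · obtain ⟨C, hC, hIC⟩ := h3 I (fun y hy => Finset.mem_sdiff.2 ⟨hI hy, hind v hvI y hy⟩) hind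
            exact ⟨C, Finset.mem_union_left _ hC, hIC⟩
          · obtain ⟨C, hC, hIC⟩ := g3 I (fun y hy => Finset.mem_erase.2
              ⟨fun e => hvI (e ▸ hy), hI hy⟩) hind
            exact ⟨C, Finset.mem_union_right _ hC, hIC⟩
      · refine ⟨{B}, by simp; exact Nat.one_le_pow _ _ (by omega), ?_, ?_⟩
        · simp only [Finset.mem_singleton, forall_eq]
          linarith
        · intro I hI _
          exact ⟨B, by simp, hI⟩

/-- Collinearity of three points of the plane, as vanishing of a determinant. -/
def Col {F : Type*} [Field F] (a x y : Fin 2 → F) : Prop :=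
  (x 0 - a 0) * (y 1 - a 1) = (x 1 - a 1) * (y 0 - a 0)

theorem genPos_not_col {F : Type*} [Field F] {P : Set (Fin 2 → F)} (hP : IsGenPos F 2 P)
    {a x y : Fin 2 → F} (ha : a ∈ P) (hx : x ∈ P) (hy : y ∈ P) (hax : a ≠ x) (hay : a ≠ y)
    (hxy : x ≠ y) : ¬ Col a x y := by
  intro hc
  have hs := hP {a, x, y} (by intro z hz; simp at hz; rcases hz with rfl | rfl | rfl <;> assumption)
    (by rw [Finset.card_eq_three]; exact ⟨a, x, y, hax, hay, hxy, rfl⟩)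
  have hinj : Function.Injective ![a, x, y] := by
    intro i j hij
    fin_cases i <;> fin_cases j <;> simp_all
  have hmem : ∀ i, ![a, x, y] i ∈ ({a, x, y} : Finset (Fin 2 → F)) := by
    intro i; fin_cases i <;> simp
  let emb : Fin 3 ↪ ({a, x, y} : Finset (Fin 2 → F)) :=
    ⟨fun i : Fin 3 => ⟨![a, x, y] i, hmem i⟩, fun i j hij => hinj (congrArg Subtype.val hij)⟩
  have h3 : AffineIndependent F ![a, x, y] := hs.comp_embedding emb
  rw [affineIndependent_iff_not_collinear_set] at h3
  apply h3
  rw [collinear_iff_of_mem (p₀ := a) (by simp)]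
  refine ⟨x - a, ?_⟩
  unfold Col at hc
  have key : ∃ r : F, y = r • (x - a) +ᵥ a := by
    by_cases h0 : x 0 - a 0 = 0
    · have h1 : x 1 - a 1 ≠ 0 := by
        intro h1
        apply hax
        ext i
        fin_cases i
        · exact (sub_eq_zero.1 h0).symm
        · exact (sub_eq_zero.1 h1).symm
      refine ⟨(y 1 - a 1) / (x 1 - a 1), ?_⟩
      have : y 0 - a 0 = 0 := by
        rw [h0, zero_mul] at hc
        exact (mul_eq_zero.1 hc.symm).resolve_left h1
      ext i
      fin_cases i
      · simp [h0]; exact sub_eq_zero.1 this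
      · simp [h1]
    · refine ⟨(y 0 - a 0) / (x 0 - a 0), ?_⟩
      ext i
      fin_cases i
      · simp [h0]
      · simp
        field_simp
        linear_combination hc
  rintro p (rfl | rfl | rfl)
  · exact ⟨0, by simp⟩
  · exact ⟨1, by simp⟩
  · exact key

theorem mult_le_two {F : Type*} [Field F] (A : Finset (Fin 2 → F)) (hA : IsGenPos F 2 ↑A)
    {x y : Fin 2 → F} (hxy : x ≠ y) :
    (A.filter (fun a => a ≠ x ∧ a ≠ y ∧ Col a x y)).card ≤ 2 := by
  by_contra hcon
  push Not at hcon
  obtain ⟨a, b, c, ha, hb, hc, hab, hac, hbc⟩ := Finset.two_lt_card_iff.1 hcon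
  simp only [Finset.mem_filter] at ha hb hc
  refine genPos_not_col hA (Finset.mem_coe.2 ha.1) (Finset.mem_coe.2 hb.1)
    (Finset.mem_coe.2 hc.1) hab hac hbc ?_
  have h1 := ha.2.2.2
  have h2 := hb.2.2.2
  have h3 := hc.2.2.2
  unfold Col at *
  have hd : y 0 - x 0 ≠ 0 ∨ y 1 - x 1 ≠ 0 := by
    by_contra! h
    apply hxy
    ext i
    fin_cases i
    · exact (sub_eq_zero.1 h.1).symm
    · exact (sub_eq_zero.1 h.2).symm
  have e1 : (b 0 - a 0) * (y 1 - x 1) = (b 1 - a 1) * (y 0 - x 0) := by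
    linear_combination h1 - h2
  have e2 : (c 0 - a 0) * (y 1 - x 1) = (c 1 - a 1) * (y 0 - x 0) := by
    linear_combination h1 - h3
  rcases hd with hd | hd
  · apply mul_right_cancel₀ hd
    linear_combination (c 0 - a 0) * e1 - (b 0 - a 0) * e2
  · apply mul_right_cancel₀ hd
    linear_combination (c 1 - a 1) * e1 - (b 1 - a 1) * e2

theorem pairs_fiber {V K : Type*} [Fintype K] [DecidableEq K] (D : Finset V) (f : V → K) :
    (D.card : ℝ) ^ 2 ≤ Fintype.card K * ((D ×ˢ D).filter (fun z => f z.1 = f z.2)).card := by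
  have h1 : D.card = ∑ k : K, (D.filter (fun x => f x = k)).card :=
    Finset.card_eq_sum_card_fiberwise (fun _ _ => by simp)
  have h2 : ((D ×ˢ D).filter (fun z => f z.1 = f z.2)).card =
      ∑ k : K, (D.filter (fun x => f x = k)).card ^ 2 := by
    rw [Finset.card_eq_sum_card_fiberwise (f := fun z => f z.1) (t := Finset.univ)
      (fun _ _ => by simp)]
    refine Finset.sum_congr rfl fun k _ => ?_
    rw [sq, ← Finset.card_product]
    congr 1
    ext z
    simp only [Finset.mem_filter, Finset.mem_product]
    constructor
    · rintro ⟨⟨⟨h, h'⟩, e⟩, e'⟩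
      exact ⟨⟨h, e'⟩, h', e ▸ e'⟩
    · rintro ⟨⟨h, e⟩, h', e'⟩
      exact ⟨⟨⟨h, h'⟩, e.trans e'.symm⟩, e⟩
  rw [h2, h1]
  push_cast
  exact sq_sum_le_card_mul_sum_sq

/-- slope of the line from `a` to `x`. -/
noncomputable def slp {F : Type*} [Field F] (a x : Fin 2 → F) : Option F :=
  if x 0 - a 0 = 0 then none else some ((x 1 - a 1) / (x 0 - a 0))

theorem col_of_slp {F : Type*} [Field F] {a x y : Fin 2 → F} (h : slp a x = slp a y) :
    Col a x y := by
  unfold slp at h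
  unfold Col
  split_ifs at h with h1 h2 h2
  · rw [h1, h2]; ring
  · simp only [Option.some.injEq] at h
    field_simp at h
    linear_combination -h

theorem pairs_at {F : Type*} [Field F] [Fintype F] (a : Fin 2 → F) (B : Finset (Fin 2 → F))
    (hq : 2 ≤ Fintype.card F) (hB : 8 * (Fintype.card F : ℝ) < B.card) :
    (B.card : ℝ) ^ 2 / (4 * Fintype.card F) ≤
      ((B ×ˢ B).filter (fun z => z.1 ≠ z.2 ∧ a ≠ z.1 ∧ a ≠ z.2 ∧ Col a z.1 z.2)).card := by
  set D := B.erase a with hD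
  have h1 := pairs_fiber D (slp a)
  have h2 : ((D ×ˢ D).filter (fun z => slp a z.1 = slp a z.2)).card ≤
      ((B ×ˢ B).filter (fun z => z.1 ≠ z.2 ∧ a ≠ z.1 ∧ a ≠ z.2 ∧ Col a z.1 z.2)).card
        + D.card := by
    rw [← Finset.diag_card D]
    refine le_trans (Finset.card_le_card ?_) (Finset.card_union_le _ _)
    rintro ⟨x, y⟩ hz
    simp only [Finset.mem_filter, Finset.mem_product, hD, Finset.mem_erase] at hz
    simp only [Finset.mem_union, Finset.mem_filter, Finset.mem_product, Finset.mem_diag, hD,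
      Finset.mem_erase]
    by_cases hxy : x = y
    · right; exact ⟨hz.1.1, hxy⟩
    · left
      exact ⟨⟨hz.1.1.2, hz.1.2.2⟩, hxy, hz.1.1.1.symm, hz.1.2.1.symm, col_of_slp hz.2⟩
  have h3 : B.card ≤ D.card + 1 := by
    rw [hD]; have := Finset.pred_card_le_card_erase (s := B) (a := a); omega
  have h4 : 8 * Fintype.card F ≤ D.card := by
    have : 8 * Fintype.card F < B.card := by exact_mod_cast hB
    omega
  simp only [Fintype.card_option] at h1
  set M := ((D ×ˢ D).filter (fun z => slp a z.1 = slp a z.2)).card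
  set M' := ((B ×ˢ B).filter (fun z => z.1 ≠ z.2 ∧ a ≠ z.1 ∧ a ≠ z.2 ∧ Col a z.1 z.2)).card
  generalize D.card = n at *
  generalize B.card = b at *
  generalize Fintype.card F = q at *
  have h2' : (M : ℝ) ≤ M' + n := by exact_mod_cast h2
  have h3' : (b : ℝ) ≤ n + 1 := by exact_mod_cast h3
  have h4' : 8 * (q : ℝ) ≤ n := by exact_mod_cast h4
  have hq' : (2 : ℝ) ≤ q := by exact_mod_cast hq
  push_cast at h1
  rw [div_le_iff₀ (by linarith)]
  have hn : (16 : ℝ) ≤ n := by linarith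
  have k1 : (b : ℝ) ^ 2 ≤ (n + 1) ^ 2 := by gcongr
  have k2 : ((n : ℝ) + 1) ^ 2 ≤ 5 / 4 * n ^ 2 := by nlinarith
  have k3 : ((n : ℝ)) ^ 2 ≤ (3 / 2 * q) * (M' + n) := by
    refine h1.trans (mul_le_mul (by linarith) h2' (by positivity) (by positivity))
  have k4 : (q : ℝ) * n ≤ n ^ 2 / 8 := by nlinarith
  nlinarith

/-- Neighbourhood of `v` in the graph of pairs collinear with a point of `A`. -/
noncomputable def Nb {F : Type*} [Field F] [Fintype F] (A : Finset (Fin 2 → F))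
    (v : Fin 2 → F) : Finset (Fin 2 → F) :=
  Finset.univ.filter (fun y => v ≠ y ∧ ∃ a ∈ A, a ≠ v ∧ a ≠ y ∧ Col a v y)

theorem deg_lemma {F : Type*} [Field F] [Fintype F] (A : Finset (Fin 2 → F))
    (hA : IsGenPos F 2 ↑A) (B : Finset (Fin 2 → F))
    (hq : 2 ≤ Fintype.card F) (hB : 8 * (Fintype.card F : ℝ) < B.card) :
    ∃ v ∈ B, (A.card / (8 * Fintype.card F) : ℝ) * B.card ≤ ((B ∩ Nb A v).card : ℝ) := by
  by_contra! hcon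
  have hq' : (2 : ℝ) ≤ Fintype.card F := by exact_mod_cast hq
  have hne : B.Nonempty := by
    rw [← Finset.card_pos]
    have : (0 : ℝ) < B.card := by linarith
    exact_mod_cast this
  have hlt := Finset.sum_lt_sum_of_nonempty hne hcon
  simp only [Finset.sum_const, nsmul_eq_mul] at hlt
  have hlow : (A.card : ℝ) * ((B.card : ℝ) ^ 2 / (4 * Fintype.card F)) ≤
      ∑ a ∈ A, (((B ×ˢ B).filter
        (fun z => z.1 ≠ z.2 ∧ a ≠ z.1 ∧ a ≠ z.2 ∧ Col a z.1 z.2)).card : ℝ) := by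
    rw [← nsmul_eq_mul]
    exact Finset.card_nsmul_le_sum _ _ _ (fun a _ => pairs_at a B hq hB)
  have hup : ∑ a ∈ A, ((B ×ˢ B).filter
        (fun z => z.1 ≠ z.2 ∧ a ≠ z.1 ∧ a ≠ z.2 ∧ Col a z.1 z.2)).card ≤
      ∑ x ∈ B, 2 * (B ∩ Nb A x).card := by
    simp only [Finset.card_filter]
    rw [Finset.sum_comm, Finset.sum_product]
    refine Finset.sum_le_sum fun x _ => ?_
    rw [← Finset.filter_mem_eq_inter, Finset.card_filter, Finset.mul_sum]
    refine Finset.sum_le_sum fun y _ => ?_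
    rw [← Finset.card_filter]
    by_cases hxy : x = y
    · simp [hxy]
    · by_cases hy : y ∈ Nb A x
      · rw [if_pos hy]
        simpa [hxy] using mult_le_two A hA hxy
      · rw [if_neg hy]
        simp only [mul_zero, Nat.le_zero, Finset.card_eq_zero, Finset.filter_eq_empty_iff]
        rintro a ha ⟨_, h1, h2, h3⟩
        exact hy (by simp only [Nb, Finset.mem_filter]; exact ⟨Finset.mem_univ _, hxy, a, ha, h1, h2, h3⟩)
  have hup' : ∑ a ∈ A, (((B ×ˢ B).filter
        (fun z => z.1 ≠ z.2 ∧ a ≠ z.1 ∧ a ≠ z.2 ∧ Col a z.1 z.2)).card : ℝ) ≤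
      2 * ∑ x ∈ B, ((B ∩ Nb A x).card : ℝ) := by
    rw [Finset.mul_sum]
    exact_mod_cast hup
  have e : (A.card : ℝ) * ((B.card : ℝ) ^ 2 / (4 * Fintype.card F)) =
      2 * (B.card * (A.card / (8 * Fintype.card F) * B.card)) := by
    field_simp
    ring
  linarith

theorem containers {F : Type*} [Field F] [Fintype F] (s t : ℕ)
    (hq : 2 ≤ Fintype.card F)
    (hst : ((Fintype.card F) ^ 2 : ℝ) ≤ 8 * Fintype.card F *
      Real.exp (s / (8 * Fintype.card F) * t)) :
    ∃ CC : Finset (Finset (Fin 2 → F)),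
      CC.card ≤ (Fintype.card F ^ 2) ^ s * (Fintype.card F ^ 2 + 1) ^ t ∧
      (∀ C ∈ CC, C.card ≤ 8 * Fintype.card F) ∧
      ∀ T : Finset (Fin 2 → F), IsGenPos F 2 ↑T → s ≤ T.card → ∃ C ∈ CC, T ⊆ C := by
  have hV : Fintype.card (Fin 2 → F) = Fintype.card F ^ 2 := by simp
  have hA : ∀ A : Finset (Fin 2 → F), ∃ CC : Finset (Finset (Fin 2 → F)),
      (IsGenPos F 2 (↑A : Set (Fin 2 → F)) → A.card = s →
      (∀ I : Finset (Fin 2 → F), (∀ v ∈ I, ∀ y ∈ I, y ∉ Nb A v) → ∃ C ∈ CC, I ⊆ C)) ∧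
      CC.card ≤ (Fintype.card F ^ 2 + 1) ^ t ∧ (∀ C ∈ CC, C.card ≤ 8 * Fintype.card F) := by
    intro A
    by_cases h : IsGenPos F 2 (↑A : Set (Fin 2 → F)) ∧ A.card = s
    · obtain ⟨CC, h1, h2, h3⟩ := kw (Nb A) (8 * Fintype.card F)
        (A.card / (8 * Fintype.card F)) (fun B hB => deg_lemma A h.1 B hq hB) t
        (Fintype.card F ^ 2) Finset.univ (by rw [Finset.card_univ, hV]) (by
          rw [h.2]; push_cast; exact hst)
      refine ⟨CC, fun _ _ I hI => h3 I (Finset.subset_univ _) hI, h1, fun C hC => ?_⟩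
      exact_mod_cast h2 C hC
    · exact ⟨∅, fun h1 h2 => absurd ⟨h1, h2⟩ h, by simp, by simp⟩
  choose f hf1 hf2 hf3 using hA
  refine ⟨(Finset.powersetCard s Finset.univ).biUnion f, ?_, ?_, ?_⟩
  · refine (Finset.card_biUnion_le_card_mul _ _ _ (fun A _ => hf2 A)).trans ?_
    gcongr
    rw [Finset.card_powersetCard, Finset.card_univ, hV]
    exact Nat.choose_le_pow _ _
  · intro C hC
    obtain ⟨A, _, hC⟩ := Finset.mem_biUnion.1 hC
    exact hf3 A C hC
  · intro T hT hs
    obtain ⟨A, hAT, hAs⟩ := Finset.exists_subset_card_eq hs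
    have hAg : IsGenPos F 2 (↑A : Set (Fin 2 → F)) := fun u hu =>
      hT u (hu.trans (Finset.coe_subset.2 hAT))
    obtain ⟨C, hC, hTC⟩ := hf1 A hAg hAs T (by
      intro v hv y hy hmem
      simp only [Nb, Finset.mem_filter] at hmem
      obtain ⟨_, hvy, a, ha, hav, hay, hc⟩ := hmem
      exact genPos_not_col hT (Finset.mem_coe.2 (hAT ha)) (Finset.mem_coe.2 hv)
        (Finset.mem_coe.2 hy) hav hay hvy hc)
    exact ⟨C, Finset.mem_biUnion.2 ⟨A, by simp [Finset.mem_powersetCard, hAs], hC⟩, hTC⟩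

theorem choose_bound (q m : ℕ) (p : ℝ) (hp : 0 ≤ p) (h : 64 * p * q ≤ m) :
    ((8 * q).choose m : ℝ) * p ^ m ≤ (1 / 2) ^ m := by
  have h1 : ((8 * q).choose m : ℝ) ≤ ((8 * q : ℕ) : ℝ) ^ m / m.factorial :=
    Nat.choose_le_pow_div m (8 * q)
  have hm := Real.pow_div_factorial_le_exp (m : ℝ) (by positivity) m
  have hf : (0 : ℝ) < m.factorial := by positivity
  calc ((8 * q).choose m : ℝ) * p ^ m ≤ ((8 * q : ℕ) : ℝ) ^ m / m.factorial * p ^ m := by gcongr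
    _ = (8 * q * p) ^ m / m.factorial := by push_cast; rw [mul_pow _ p]; ring
    _ ≤ (m / 8) ^ m / m.factorial := by gcongr; linarith
    _ = (1 / 8) ^ m * ((m : ℝ) ^ m / m.factorial) := by
      rw [div_pow, div_pow]; field_simp; simp
    _ ≤ (1 / 8) ^ m * Real.exp m := by gcongr
    _ = (1 / 8 * Real.exp 1) ^ m := by rw [mul_pow, ← Real.exp_nat_mul, mul_one]
    _ ≤ (1 / 2) ^ m := by
      gcongr
      have := Real.exp_one_lt_d9
      linarith

theorem main_bound {F : Type*} [Field F] [Fintype F] (q : ℕ) (hF : Fintype.card F = q)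
    (hq : 256 ≤ q) (p k : ℝ) (hp0 : 0 ≤ p) (hp1 : p ≤ 1) (hk : 64 * p * q ≤ k)
    (hk2 : 64 * Real.sqrt q * (Real.logb 2 q) ^ 2 ≤ k) :
    bernoulliProb (Fin 2 → F) p
      (fun S => ∃ T : Finset (Fin 2 → F), T ⊆ S ∧ IsGenPos F 2 ↑T ∧ k ≤ (T.card : ℝ))
      ≤ 1 / q := by
  have hqR : (256 : ℝ) ≤ q := by exact_mod_cast hq
  set L := Real.logb 2 q with hL
  set r := Real.sqrt q with hr
  have hr1 : 1 ≤ r := by rw [hr]; exact Real.one_le_sqrt.2 (by linarith)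
  have hr2 : r ^ 2 = q := Real.sq_sqrt (by linarith)
  have hqL : (2 : ℝ) ^ L = q := Real.rpow_logb (by norm_num) (by norm_num) (by linarith)
  have hL8 : 8 ≤ L := by
    rw [hL, Real.le_logb_iff_rpow_le (by norm_num) (by linarith)]
    norm_num
    exact hq
  set s := ⌈r * L⌉₊ with hs
  have hs1 : r * L ≤ s := Nat.le_ceil _
  have hs2 : (s : ℝ) ≤ r * L + 1 := (Nat.ceil_lt_add_one (by positivity)).le
  have hrL : 8 ≤ r * L := by nlinarith
  set m := ⌈k⌉₊ with hm
  have hm1 : k ≤ m := Nat.le_ceil _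
  have hlog : Real.log q ≤ L := by
    rw [hL, Real.logb, le_div_iff₀ (Real.log_pos (by norm_num))]
    have h1 : Real.log 2 ≤ 1 := by have := Real.log_two_lt_d9; linarith
    have h2 : 0 ≤ Real.log q := Real.log_nonneg (by linarith)
    nlinarith
  obtain ⟨CC, c1, c2, c3⟩ := containers (F := F) s s (by omega) (by
    rw [hF]
    have : (q : ℝ) ≤ Real.exp (s / (8 * q) * s) := by
      rw [← Real.log_le_iff_le_exp (by linarith)]
      refine hlog.trans ?_
      have : (r * L) ^ 2 ≤ (s : ℝ) ^ 2 := by gcongr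
      rw [div_mul_eq_mul_div, le_div_iff₀ (by linarith)]
      rw [mul_pow, hr2] at this
      have h5 : L * 8 ≤ L ^ 2 := by nlinarith
      have h6 : (L * 8) * q ≤ L ^ 2 * q := by gcongr
      nlinarith
    nlinarith)
  rw [hF] at c1 c2
  have hb := bern_union p hp0 hp1
    (fun S => ∃ T : Finset (Fin 2 → F), T ⊆ S ∧ IsGenPos F 2 ↑T ∧ k ≤ (T.card : ℝ)) m
    (CC.biUnion (fun C => Finset.powersetCard m C))
    (by
      intro Y hY
      obtain ⟨C, _, hC⟩ := Finset.mem_biUnion.1 hY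
      exact (Finset.mem_powersetCard.1 hC).2)
    (by
      rintro S ⟨T, hTS, hT, hTk⟩
      have hTs : s ≤ T.card := by
        have : (s : ℝ) ≤ T.card := by nlinarith
        exact_mod_cast this
      obtain ⟨C, hC, hTC⟩ := c3 T hT hTs
      obtain ⟨Y, hYT, hYm⟩ := Finset.exists_subset_card_eq (Nat.ceil_le.2 hTk : m ≤ T.card)
      exact ⟨Y, Finset.mem_biUnion.2 ⟨C, hC, Finset.mem_powersetCard.2 ⟨hYT.trans hTC, hYm⟩⟩,
        hYT.trans hTS⟩)
  refine hb.trans ?_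
  have hcard : (CC.biUnion (fun C => Finset.powersetCard m C)).card ≤
      CC.card * (8 * q).choose m := by
    refine Finset.card_biUnion_le_card_mul _ _ _ (fun C hC => ?_)
    rw [Finset.card_powersetCard]
    exact Nat.choose_le_choose m (c2 C hC)
  have hCC : CC.card ≤ q ^ (5 * s) := by
    refine c1.trans ?_
    rw [pow_mul, ← mul_pow]
    gcongr
    have : q ^ 2 + 1 ≤ q ^ 3 := by nlinarith
    calc q ^ 2 * (q ^ 2 + 1) ≤ q ^ 2 * q ^ 3 := by gcongr
      _ = q ^ 5 := by ring
  have hcardR : ((CC.biUnion (fun C => Finset.powersetCard m C)).card : ℝ) ≤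
      (q : ℝ) ^ (5 * s) * (8 * q).choose m := by
    exact_mod_cast hcard.trans (Nat.mul_le_mul_right _ hCC)
  calc ((CC.biUnion (fun C => Finset.powersetCard m C)).card : ℝ) * p ^ m
      ≤ (q : ℝ) ^ (5 * s) * (8 * q).choose m * p ^ m := by gcongr
    _ = (q : ℝ) ^ (5 * s) * ((8 * q).choose m * p ^ m) := by ring
    _ ≤ (q : ℝ) ^ (5 * s) * (1 / 2) ^ m := by
      gcongr
      exact choose_bound q m p hp0 (hk.trans hm1)
    _ = (2 : ℝ) ^ (L * (5 * s) - m) := by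
      rw [Real.rpow_sub (by norm_num), Real.rpow_natCast, Real.rpow_mul (by norm_num), hqL,
        one_div, inv_pow, div_eq_mul_inv, ← Real.rpow_natCast]
      push_cast
      rfl
    _ ≤ (2 : ℝ) ^ (-L) := by
      apply Real.rpow_le_rpow_of_exponent_le (by norm_num)
      have : L * s ≤ L * (r * L + 1) := by gcongr
      have h7 : 8 * L ≤ (r * L) * L := by gcongr
      nlinarith
    _ = 1 / q := by rw [Real.rpow_neg (by norm_num), hqL, one_div]

/-- Upper bounds for the largest general position subset of a `p`-random
subset of `𝔽_q²`. -/
theorem random_turan_upper_Fq2 :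
    ∃ c : ℝ, 0 < c ∧ ∀ δ : ℝ, 0 < δ → ∃ Q : ℕ, ∀ q : ℕ, Q ≤ q → IsPrimePow q →
      ∀ (F : Type) [Field F] [Fintype F], Fintype.card F = q →
        ∀ p : ℝ, 0 ≤ p → p ≤ 1 →
          ((p ≤ (q : ℝ) ^ (-(1 : ℝ) / 2) * (Real.logb 2 q) ^ 2 →
            bernoulliProb (Fin 2 → F) p
              (fun S => ∃ T : Finset (Fin 2 → F), T ⊆ S ∧ IsGenPos F 2 ↑T ∧
                c * (q : ℝ) ^ ((1 : ℝ) / 2) * (Real.logb 2 q) ^ 2 ≤ (T.card : ℝ)) ≤ δ) ∧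
          ((q : ℝ) ^ (-(1 : ℝ) / 2) * (Real.logb 2 q) ^ 2 ≤ p →
            bernoulliProb (Fin 2 → F) p
              (fun S => ∃ T : Finset (Fin 2 → F), T ⊆ S ∧ IsGenPos F 2 ↑T ∧
                c * p * (q : ℝ) ≤ (T.card : ℝ)) ≤ δ)) := by
  refine ⟨64, by norm_num, fun δ hδ => ⟨max 256 ⌈1 / δ⌉₊, ?_⟩⟩
  intro q hQ _ F _ _ hF p hp0 hp1
  have hq : 256 ≤ q := (le_max_left _ _).trans hQ
  have hqd : 1 / δ ≤ q := (Nat.le_ceil _).trans (by exact_mod_cast (le_max_right _ _).trans hQ)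
  have hqR : (256 : ℝ) ≤ q := by exact_mod_cast hq
  have hfin : 1 / (q : ℝ) ≤ δ := by
    rw [div_le_iff₀ hδ] at hqd
    rw [div_le_iff₀ (by linarith)]
    linarith
  have hsq : (q : ℝ) ^ ((1 : ℝ) / 2) = Real.sqrt q := (Real.sqrt_eq_rpow _).symm
  have hmul : (q : ℝ) ^ (-(1 : ℝ) / 2) * q = Real.sqrt q := by
    rw [← hsq]
    nth_rewrite 2 [← Real.rpow_one (q : ℝ)]
    rw [← Real.rpow_add (by linarith)]
    norm_num
  have hqp : (0 : ℝ) ≤ q := by linarith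
  constructor
  · intro h
    refine (main_bound q hF hq p _ hp0 hp1 ?_ (le_of_eq (by rw [hsq]))).trans hfin
    have := mul_le_mul_of_nonneg_right h hqp
    rw [hsq, ← hmul]
    nlinarith
  · intro h
    refine (main_bound q hF hq p _ hp0 hp1 le_rfl ?_).trans hfin
    have := mul_le_mul_of_nonneg_right h hqp
    rw [← hmul]
    nlinarith
end
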